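/- Let (Γ,·) be a finite group and let (D,γ) be a Γ-labelled complete digraph on |Γ|+1 vertices containing no balanced directed cycle. Let (X,u,v,γ',R) be an efficient tuple in (D,γ). Then R ≠ Γ, and |V(D) \ X| ≥ max{|stab_l(R)|, |stab_r(R)|}. Moreover, if (X,u,v,γ',R) is super-efficient, then |V(D) \ X| ≥ max{|stab_l(R)|, |stab_r(R)|} + 1. -/

import Mathlib

/-!
The stabilizer `K` of a set `R ≠ Γ` on either side acts freely on `Γ` and preserves `Rᶜ`, so a single
element `g ∉ R` yields `|K|` elements `k * g` (respectively `g * k`) of `Rᶜ`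
(`ncard_stabl_add_ncard_le`, `ncard_stabr_add_ncard_le`). Hence `|R| + |K| ≤ |Γ|`, and both bounds
follow from `|X| ≤ |R| + 1` (respectively `|X| ≤ |R|`) and `|V| = |Γ| + 1`.

That `R ≠ Γ` is where balanced cycles enter: if some path from `u` to `v` had `γ'`-value
`(γ' v u)⁻¹`, closing it with the arc `(v, u)` would give a `γ'`-balanced cycle. Since shifting
amounts to a change of gauge `γ' a b = f a * γ a b * (f b)⁻¹` (`ShiftEquiv.exists_gauge`), that cycle
would be `γ`-balanced too.
-/

/-- The cumulative product of the arc-labels of the directed cycle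
`c = [v₀, v₁, …, v_{ℓ-1}]` (with closing arc `(v_{ℓ-1}, v₀)`). -/
def cycleProd {V Γ : Type} [Monoid Γ] (γ : V → V → Γ) (c : List V) : Γ :=
  ((c.zip (c.rotate 1)).map fun e => γ e.1 e.2).prod

/-- `c` is a directed cycle of the complete digraph (a list of at least two
pairwise distinct vertices) which is balanced with respect to `γ`. -/
def IsBalancedCycle {V Γ : Type} [Monoid Γ] (γ : V → V → Γ) (c : List V) : Prop :=
  2 ≤ c.length ∧ c.Nodup ∧ cycleProd γ c = 1

/-- The cumulative product of the arc-labels along the directed path given by the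
list of vertices `p` (a single-vertex path has value `1`). -/
def pathProd {V Γ : Type} [Monoid Γ] (γ : V → V → Γ) (p : List V) : Γ :=
  ((p.zip p.tail).map fun e => γ e.1 e.2).prod

/-- `R_{D,γ}(X, x, y)`: the set of `γ`-values of directed paths inside `X`
from `x` to `y`. -/
def pathVals {V Γ : Type} [Monoid Γ] (γ : V → V → Γ) (X : Set V) (x y : V) : Set Γ :=
  {g | ∃ p : List V, p ≠ [] ∧ p.Nodup ∧ (∀ w ∈ p, w ∈ X) ∧
        p.head? = some x ∧ p.getLast? = some y ∧ pathProd γ p = g}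

/-- The left stabilizer `stab_l(S) = {g : g·S = S}` of a subset `S` of a group. -/
def stabl {Γ : Type} [Group Γ] (S : Set Γ) : Set Γ :=
  {g | (fun s => g * s) '' S = S}

/-- The right stabilizer `stab_r(S) = {g : S·g = S}` of a subset `S` of a group. -/
def stabr {Γ : Type} [Group Γ] (S : Set Γ) : Set Γ :=
  {g | (fun s => s * g) '' S = S}

/-- The labelling obtained from `γ` by shifting by `g` at the vertex `v`:
labels of arcs into `v` are multiplied by `g⁻¹` on the right, labels of arcs
out of `v` are multiplied by `g` on the left, all other labels are unchanged. -/
def shiftLab {V Γ : Type} [Group Γ] [DecidableEq V] (γ : V → V → Γ) (g : Γ) (v : V) :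
    V → V → Γ :=
  fun a b =>
    if a = b then γ a b
    else if b = v then γ a b * g⁻¹
    else if a = v then g * γ a b
    else γ a b

/-- Two labellings are shifting-equivalent if one is obtained from the other by a
finite sequence of shifting operations. -/
def ShiftEquiv {V Γ : Type} [Group Γ] [DecidableEq V] (γ γ' : V → V → Γ) : Prop :=
  Relation.ReflTransGen (fun α β => ∃ g v, β = shiftLab α g v) γ γ'

/-- `(X, u, v, γ', R)` is an efficient tuple in `(D, γ)`: `u, v ∈ X` are distinct,
`γ'` is shifting-equivalent to `γ`, and `R ⊆ R_{D,γ'}(X,u,v)` has a non-trivial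
right stabilizer and satisfies `|R| ≥ |X| - 1`. -/
def IsEfficientTuple {V Γ : Type} [Group Γ] [DecidableEq V] (γ : V → V → Γ)
    (X : Set V) (u v : V) (γ' : V → V → Γ) (R : Set Γ) : Prop :=
  u ∈ X ∧ v ∈ X ∧ u ≠ v ∧ ShiftEquiv γ γ' ∧ R ⊆ pathVals γ' X u v ∧
    (∃ g ∈ stabr R, g ≠ 1) ∧ X.ncard ≤ R.ncard + 1

/-- A super-efficient tuple is an efficient tuple with `|R| ≥ |X|`. -/
def IsSuperEfficientTuple {V Γ : Type} [Group Γ] [DecidableEq V] (γ : V → V → Γ)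
    (X : Set V) (u v : V) (γ' : V → V → Γ) (R : Set Γ) : Prop :=
  IsEfficientTuple γ X u v γ' R ∧ X.ncard ≤ R.ncard

/-- Shifting-equivalent labellings differ by a potential `f : V → Γ`; loops, whose labels are not
changed by shifting, are excluded. -/
theorem ShiftEquiv.exists_gauge {V Γ : Type} [Group Γ] [DecidableEq V] {γ γ' : V → V → Γ}
    (h : ShiftEquiv γ γ') :
    ∃ f : V → Γ, ∀ a b, a ≠ b → γ' a b = f a * γ a b * (f b)⁻¹ := by
  induction h with
  | refl => exact ⟨fun _ => 1, by simp⟩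
  | tail _ hstep ih =>
    obtain ⟨f, hf⟩ := ih
    obtain ⟨g, v, rfl⟩ := hstep
    refine ⟨Function.update f v (g * f v), fun a b hab => ?_⟩
    by_cases hb : b = v
    · subst hb
      simp [shiftLab, hab, hf a b hab, mul_assoc]
    · by_cases ha : a = v
      · subst ha
        simp [shiftLab, hab, hb, hf a b hab, mul_assoc]
      · simp [shiftLab, hab, ha, hb, hf a b hab]

theorem pathProd_cons_cons {V Γ : Type} [Monoid Γ] (γ : V → V → Γ) (a b : V) (l : List V) :
    pathProd γ (a :: b :: l) = γ a b * pathProd γ (b :: l) := by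
  simp [pathProd]

theorem pathProd_gauge {V Γ : Type} [Group Γ] {γ γ' : V → V → Γ} {f : V → Γ}
    (hf : ∀ a b, a ≠ b → γ' a b = f a * γ a b * (f b)⁻¹) (a : V) (l : List V)
    (hl : (a :: l).Nodup) :
    pathProd γ' (a :: l) =
      f a * pathProd γ (a :: l) * (f ((a :: l).getLast (List.cons_ne_nil a l)))⁻¹ := by
  induction l generalizing a with
  | nil => simp [pathProd]
  | cons b l ih =>
    have hab : a ≠ b := fun h => (List.nodup_cons.1 hl).1 (by simp [h])
    rw [pathProd_cons_cons, pathProd_cons_cons, ih b (List.nodup_cons.1 hl).2, hf a b hab,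
      List.getLast_cons (List.cons_ne_nil b l)]
    group

theorem prod_zip_append_singleton {V Γ : Type} [Monoid Γ] (γ : V → V → Γ) (a x : V)
    (l : List V) :
    (((a :: l).zip (l ++ [x])).map fun e => γ e.1 e.2).prod =
      pathProd γ (a :: l) * γ ((a :: l).getLast (List.cons_ne_nil a l)) x := by
  induction l generalizing a with
  | nil => simp [pathProd]
  | cons b l ih =>
    rw [pathProd_cons_cons, List.getLast_cons (List.cons_ne_nil b l), mul_assoc, ← ih b]
    simp

theorem cycleProd_cons {V Γ : Type} [Monoid Γ] (γ : V → V → Γ) (a : V) (l : List V) :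
    cycleProd γ (a :: l) =
      pathProd γ (a :: l) * γ ((a :: l).getLast (List.cons_ne_nil a l)) a := by
  rw [← prod_zip_append_singleton, cycleProd]
  simp

theorem inv_notMem_pathVals {V Γ : Type} [Group Γ] [DecidableEq V] {γ γ' : V → V → Γ}
    (hbal : ¬ ∃ c : List V, IsBalancedCycle γ c) (hs : ShiftEquiv γ γ') (X : Set V) {u v : V}
    (huv : u ≠ v) : (γ' v u)⁻¹ ∉ pathVals γ' X u v := by
  rintro ⟨p, hne, hnd, -, hhead, hlast, hp⟩
  obtain ⟨f, hf⟩ := hs.exists_gauge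
  obtain _ | ⟨a, l⟩ := p
  · exact hne rfl
  obtain rfl : a = u := by simpa using hhead
  have hlast' : (a :: l).getLast (List.cons_ne_nil a l) = v := by
    rw [List.getLast?_eq_getLast_of_ne_nil (List.cons_ne_nil a l)] at hlast
    exact Option.some.inj hlast
  refine hbal ⟨a :: l, ?_, hnd, ?_⟩
  · obtain _ | ⟨b, l⟩ := l
    · exact absurd hlast' huv
    · simp
  · rw [pathProd_gauge hf a l hnd, hlast', hf v a huv.symm] at hp
    rw [cycleProd_cons, hlast']
    have h : pathProd γ (a :: l) = (γ v a)⁻¹ := by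
      simpa [mul_assoc] using hp
    rw [h, inv_mul_cancel]

theorem ncard_stabl_add_ncard_le {Γ : Type} [Group Γ] [Fintype Γ] {R : Set Γ} {g : Γ}
    (hg : g ∉ R) : (stabl R).ncard + R.ncard ≤ Fintype.card Γ := by
  have h : (stabl R).ncard ≤ Rᶜ.ncard := by
    refine Set.ncard_le_ncard_of_injOn (fun k => k * g) (fun k hk hkg => hg ?_)
      (fun a _ b _ hab => mul_right_cancel hab) (Set.toFinite _)
    have hk : (fun s => k * s) '' R = R := hk
    rw [← hk] at hkg
    obtain ⟨s, hs, hsg⟩ := hkg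
    exact mul_left_cancel hsg ▸ hs
  have := Set.ncard_add_ncard_compl R
  rw [Nat.card_eq_fintype_card] at this
  omega

theorem ncard_stabr_add_ncard_le {Γ : Type} [Group Γ] [Fintype Γ] {R : Set Γ} {g : Γ}
    (hg : g ∉ R) : (stabr R).ncard + R.ncard ≤ Fintype.card Γ := by
  have h : (stabr R).ncard ≤ Rᶜ.ncard := by
    refine Set.ncard_le_ncard_of_injOn (fun k => g * k) (fun k hk hkg => hg ?_)
      (fun a _ b _ hab => mul_left_cancel hab) (Set.toFinite _)
    have hk : (fun s => s * k) '' R = R := hk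
    rw [← hk] at hkg
    obtain ⟨s, hs, hsg⟩ := hkg
    exact mul_right_cancel hsg ▸ hs
  have := Set.ncard_add_ncard_compl R
  rw [Nat.card_eq_fintype_card] at this
  omega

/-- Claim 1. Let `Γ` be a finite group, `(D, γ)` a `Γ`-labelled
complete digraph on `|Γ| + 1` vertices with no balanced cycle, and `(X, u, v, γ', R)`
an efficient tuple in `(D, γ)`. Then `R ≠ Γ` and
`|V(D) \ X| ≥ max(|stab_l(R)|, |stab_r(R)|)`; if the tuple is super-efficient
(i.e. `|R| ≥ |X|`), then `|V(D) \ X| ≥ max(|stab_l(R)|, |stab_r(R)|) + 1`. -/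
theorem claim1_stabilizer_bounds {Γ V : Type} [Group Γ] [Fintype Γ]
    [Fintype V] [DecidableEq V]
    (hV : Fintype.card V = Fintype.card Γ + 1)
    (γ : V → V → Γ)
    (hbal : ¬ ∃ c : List V, IsBalancedCycle γ c)
    (X : Set V) (u v : V) (γ' : V → V → Γ) (R : Set Γ)
    (heff : IsEfficientTuple γ X u v γ' R) :
    R ≠ Set.univ ∧
    max (stabl R).ncard (stabr R).ncard ≤ (Xᶜ : Set V).ncard ∧
    (X.ncard ≤ R.ncard →
      max (stabl R).ncard (stabr R).ncard + 1 ≤ (Xᶜ : Set V).ncard) := by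
  obtain ⟨-, -, huv, hs, hR, -, hcard⟩ := heff
  have hg : (γ' v u)⁻¹ ∉ R := fun h => inv_notMem_pathVals hbal hs X huv (hR h)
  have hl := ncard_stabl_add_ncard_le hg
  have hr := ncard_stabr_add_ncard_le hg
  have hX := Set.ncard_add_ncard_compl X
  rw [Nat.card_eq_fintype_card] at hX
  exact ⟨fun h => hg (h ▸ Set.mem_univ _), by omega, fun _ => by omega⟩
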